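/- (Main Theorem) Let T be a complete first-order theory in a countable language L, U a monster model of T (κ-saturated and strongly κ-homogeneous for a sufficiently large cardinal κ), M an elementary substructure of U with |M| < κ, and φ(x;y) a partitioned L-formula that is NIP. Let μ ∈ 𝔐_φ(U). Then μ is generically stable over M if and only if μ is finitely approximable over M. -/

import Mathlib

/-!
A finitely approximable measure is generically stable by inspection. If `a_1, ..., a_n` in `M`
approximate `μ` on the instances of `θ(x;ȳ)` up to `ε/2`, then the `M`-definable partition of
`U^ȳ` according to which `a_i` satisfy `θ(x;ȳ)` witnesses definability (up to `ε`); and a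
`φ`-set of positive measure `r`, approximated within `r`, must contain some `a_i`
(`FinApprox.genericallyStable`).

For the converse, fix `θ(x;ȳ)` and `δ > 0`. The main point (`exists_convex_approx`) is that some
finite convex combination of indicators of points of `M` is `δ`-close to `μ` on all instances of
`θ`; approximating its weights by dyadic rationals turns it into the average of a sequence.
Suppose there is no such combination. The payoff of a point `a` against a signed parameter
`(b̄, ±)` is `±(μ(θ(x;b̄)) - 1_{θ(x;b̄)}(a))`.

* By Hahn-Banach separation (`minimax`), for every finite set `A` of points of `M` there is a
  finite list of signed parameters against which each `a ∈ A` has mean payoff greater than `δ`.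
* The length of this list depends on `A`. Since `φ` is NIP, the Sauer-Shelah lemma bounds the number
  of payoff vectors on a list of length `n` by a polynomial in `n` (`growth_delta`). A uniform law
  of large numbers, proved by repeatedly discarding half of a sample (`thinning`), then replaces
  the list by one of a length which depends on `δ` only, at a loss of `δ/4`.
* Lists of a fixed length form a definable family: `μ` is definable over `M`, so up to a small
  error the condition on the list imposed by each `a` is definable over `M`. By saturation
  (`exists_uniform_points`) a single list has mean payoff at least `δ/4` against every point of
  `M`.
* Integrated against `μ` itself the mean payoff is `0`, so finite satisfiability gives a point of
  `M` with mean payoff less than `δ/4` (`FinSat.exists_payoff_lt`), a contradiction.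

All lists have length a power of two, so that a list splits into pairs for halving, and
concatenating two lists of equal length takes the midpoint of their means.
-/

open FirstOrder Cardinal Set Filter Topology

/-! ### Monster model hypotheses -/

/-- `U` is `κ`-saturated: every set of formulas in finitely many object variables with
parameters from a set of size `< κ` which is finitely satisfiable in `U` is realized in `U`. -/
def IsSaturated (L : FirstOrder.Language.{0, 0}) (U : Type) [L.Structure U]
    (κ : Cardinal.{0}) : Prop :=
  ∀ (ι : Type), #ι < κ → ∀ (c : ι → U) (n : ℕ) (S : Set (L.Formula (Fin n ⊕ ι))),
    (∀ s : Finset (L.Formula (Fin n ⊕ ι)), ↑s ⊆ S →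
      ∃ a : Fin n → U, ∀ ψ ∈ s, ψ.Realize (Sum.elim a c)) →
    ∃ a : Fin n → U, ∀ ψ ∈ S, ψ.Realize (Sum.elim a c)

/-- `U` is strongly `κ`-homogeneous: any two tuples of length `< κ` with the same type
are conjugate under an automorphism of `U`. -/
def IsStronglyHomogeneous (L : FirstOrder.Language.{0, 0}) (U : Type) [L.Structure U]
    (κ : Cardinal.{0}) : Prop :=
  ∀ (ι : Type), #ι < κ → ∀ a b : ι → U,
    (∀ ψ : L.Formula ι, ψ.Realize a ↔ ψ.Realize b) →
    ∃ σ : U ≃[L] U, ∀ i, σ (a i) = b i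

variable {L : FirstOrder.Language.{0, 0}}

/-! ### NIP formulas -/

/-- The partitioned formula `φ(x;y)` has IP in `U`. -/
def FormulaHasIP (U : Type) [L.Structure U] {nx ny : ℕ}
    (φ : L.Formula (Fin nx ⊕ Fin ny)) : Prop :=
  ∀ n : ℕ, ∃ A : Finset (Fin nx → U), n ≤ A.card ∧
    ∀ K ⊆ A, ∃ bK : Fin ny → U, ∀ c ∈ A, (φ.Realize (Sum.elim c bK) ↔ c ∈ K)

/-- The partitioned formula `φ(x;y)` is NIP in `U`. -/
def FormulaIsNIP (U : Type) [L.Structure U] {nx ny : ℕ}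
    (φ : L.Formula (Fin nx ⊕ Fin ny)) : Prop :=
  ¬ FormulaHasIP U φ

/-! ### `φ`-definable sets and local Keisler measures -/

/-- The instance `φ(x;b)` of `φ(x;y)`, as a subset of `U^x`. -/
def phiSet {U : Type} [L.Structure U] {nx ny : ℕ}
    (φ : L.Formula (Fin nx ⊕ Fin ny)) (b : Fin ny → U) : Set (Fin nx → U) :=
  { a | φ.Realize (Sum.elim a b) }

/-- The Boolean algebra `Def_φ(U)` of subsets of `U^x` generated by the instances
`φ(x;b)`, `b ∈ U^y`. -/
inductive InPhiAlg {U : Type} [L.Structure U] {nx ny : ℕ}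
    (φ : L.Formula (Fin nx ⊕ Fin ny)) : Set (Fin nx → U) → Prop
  | basic (b : Fin ny → U) : InPhiAlg φ (phiSet φ b)
  | empty : InPhiAlg φ ∅
  | compl {s : Set (Fin nx → U)} : InPhiAlg φ s → InPhiAlg φ sᶜ
  | union {s t : Set (Fin nx → U)} : InPhiAlg φ s → InPhiAlg φ t → InPhiAlg φ (s ∪ t)

/-- A finitely additive probability measure on `Def_φ(U)`, i.e. an element of `𝔐_φ(U)`. -/
structure KeislerMeasure (U : Type) [L.Structure U] {nx ny : ℕ}
    (φ : L.Formula (Fin nx ⊕ Fin ny)) where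
  toFun : Set (Fin nx → U) → ℝ
  nonneg : ∀ s, InPhiAlg φ s → 0 ≤ toFun s
  total : toFun Set.univ = 1
  additive : ∀ s t, InPhiAlg φ s → InPhiAlg φ t → Disjoint s t →
    toFun (s ∪ t) = toFun s + toFun t

/-! ### Types over `M` and the Stone space `S_y(M)` -/

/-- `b` and `c` have the same type over `M`. -/
def SameTypeOver {U : Type} [L.Structure U] (M : L.ElementarySubstructure U) {n : ℕ}
    (b c : Fin n → U) : Prop :=
  ∀ (k : ℕ) (ψ : L.Formula (Fin n ⊕ Fin k)) (m : Fin k → M),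
    (ψ.Realize (Sum.elim b (fun i => (m i : U))) ↔
      ψ.Realize (Sum.elim c (fun i => (m i : U))))

/-- The setoid of "equality of type over `M`". -/
def typeSetoid {U : Type} [L.Structure U] (M : L.ElementarySubstructure U) (n : ℕ) :
    Setoid (Fin n → U) where
  r := SameTypeOver M
  iseqv := ⟨fun _ _ _ _ => Iff.rfl, fun h k ψ m => (h k ψ m).symm,
    fun h h' k ψ m => (h k ψ m).trans (h' k ψ m)⟩

/-- The space `S_n(M)` of complete `n`-types over `M` (realized in the monster `U`). -/
def TypeSpace {U : Type} [L.Structure U] (M : L.ElementarySubstructure U) (n : ℕ) : Type :=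
  Quotient (typeSetoid M n)

/-- The Stone topology on `S_n(M)`, generated by the sets of types containing a given
formula over `M`. -/
instance typeSpaceTopology {U : Type} [L.Structure U] (M : L.ElementarySubstructure U)
    (n : ℕ) : TopologicalSpace (TypeSpace M n) :=
  TopologicalSpace.generateFrom
    { S | ∃ (k : ℕ) (ψ : L.Formula (Fin n ⊕ Fin k)) (m : Fin k → M),
        S = { p : TypeSpace M n | ∃ b : Fin n → U,
          Quotient.mk (typeSetoid M n) b = p ∧
            ψ.Realize (Sum.elim b (fun i => (m i : U))) } }

/-- The function `F_a^φ : S_y(M) → ℝ`, the indicator of `φ(a;y) ∈ p` for `a ∈ M^x`. -/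
noncomputable def FunF {U : Type} [L.Structure U] {nx ny : ℕ}
    (φ : L.Formula (Fin nx ⊕ Fin ny)) (M : L.ElementarySubstructure U)
    (a : Fin nx → M) (p : TypeSpace M ny) : ℝ :=
  Set.indicator
    { q : TypeSpace M ny | ∃ b : Fin ny → U, Quotient.mk (typeSetoid M ny) b = q ∧
        φ.Realize (Sum.elim (fun i => (a i : U)) b) } (fun _ => 1) p

/-- The family `𝔽_M^φ = {F_a^φ : a ∈ M^x}` of functions on `S_y(M)`. -/
def FamilyF {U : Type} [L.Structure U] {nx ny : ℕ}
    (φ : L.Formula (Fin nx ⊕ Fin ny)) (M : L.ElementarySubstructure U) :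
    Set (TypeSpace M ny → ℝ) :=
  Set.range (fun a : Fin nx → M => FunF φ M a)

/-- The function `F_μ^φ : S_y(M) → ℝ`, `p ↦ μ(φ(x;b))` for `b ⊨ p` (well defined when `μ`
is `φ`-invariant over `M`). -/
noncomputable def FunMu {U : Type} [L.Structure U] {nx ny : ℕ}
    (φ : L.Formula (Fin nx ⊕ Fin ny)) (M : L.ElementarySubstructure U)
    (μ : KeislerMeasure U φ) (p : TypeSpace M ny) : ℝ :=
  μ.toFun (phiSet φ (Quotient.out p))

/-! ### Properties of local Keisler measures -/

/-- `μ` is `φ`-invariant over `M`. -/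
def PhiInvariant {U : Type} [L.Structure U] {nx ny : ℕ}
    (φ : L.Formula (Fin nx ⊕ Fin ny)) (M : L.ElementarySubstructure U)
    (μ : KeislerMeasure U φ) : Prop :=
  ∀ b c : Fin ny → U, SameTypeOver M b c → μ.toFun (phiSet φ b) = μ.toFun (phiSet φ c)

/-- `μ` is `M`-invariant: automorphisms of `U` fixing `M` pointwise preserve the measure of
every set in `Def_φ(U)`. -/
def MInvariant {U : Type} [L.Structure U] {nx ny : ℕ}
    (φ : L.Formula (Fin nx ⊕ Fin ny)) (M : L.ElementarySubstructure U)
    (μ : KeislerMeasure U φ) : Prop :=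
  ∀ σ : U ≃[L] U, (∀ m : M, σ (m : U) = (m : U)) → ∀ s : Set (Fin nx → U), InPhiAlg φ s →
    μ.toFun ((fun a : Fin nx → U => (σ : U → U) ∘ a) '' s) = μ.toFun s

/-- `μ` is `φ`-definable over `M` (Definition 4.3(i)). -/
def PhiDefinable {U : Type} [L.Structure U] {nx ny : ℕ}
    (φ : L.Formula (Fin nx ⊕ Fin ny)) (M : L.ElementarySubstructure U)
    (μ : KeislerMeasure U φ) : Prop :=
  ∀ ε : ℝ, 0 < ε → ∃ (m k : ℕ) (ψ : Fin m → L.Formula (Fin ny ⊕ Fin k)) (c : Fin k → M),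
    (∀ b : Fin ny → U, ∃! i : Fin m, (ψ i).Realize (Sum.elim b (fun j => (c j : U)))) ∧
    ∀ i : Fin m, ∀ e e' : Fin ny → U,
      (ψ i).Realize (Sum.elim e (fun j => (c j : U))) →
      (ψ i).Realize (Sum.elim e' (fun j => (c j : U))) →
      |μ.toFun (phiSet φ e) - μ.toFun (phiSet φ e')| < ε

/-- `μ` is finitely satisfiable over `M`: every `φ`-formula of positive measure has a
realization in `M`. -/
def FinSat {U : Type} [L.Structure U] {nx ny : ℕ}
    (φ : L.Formula (Fin nx ⊕ Fin ny)) (M : L.ElementarySubstructure U)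
    (μ : KeislerMeasure U φ) : Prop :=
  ∀ s : Set (Fin nx → U), InPhiAlg φ s → 0 < μ.toFun s →
    ∃ a : Fin nx → M, (fun i => (a i : U)) ∈ s

/-- `μ` is `φ`-generically stable over `M` (Definition 4.3(iii)). -/
def PhiGenericallyStable {U : Type} [L.Structure U] {nx ny : ℕ}
    (φ : L.Formula (Fin nx ⊕ Fin ny)) (M : L.ElementarySubstructure U)
    (μ : KeislerMeasure U φ) : Prop :=
  PhiDefinable φ M μ ∧ FinSat φ M μ

/-! ### The algebra `Δ_φ` of partitioned formulas and full generic stability -/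

/-- The family `Δ_φ` of Boolean combinations `θ(x; y_1, ..., y_k)` of the formulas
`φ(x;y_i)`, viewed as set-valued maps on tuples of parameters. -/
inductive InDeltaPhi {U : Type} [L.Structure U] {nx ny : ℕ}
    (φ : L.Formula (Fin nx ⊕ Fin ny)) :
    (k : ℕ) → ((Fin k → Fin ny → U) → Set (Fin nx → U)) → Prop
  | inst (k : ℕ) (j : Fin k) : InDeltaPhi φ k (fun bs => phiSet φ (bs j))
  | empty (k : ℕ) : InDeltaPhi φ k (fun _ => ∅)
  | compl {k : ℕ} {G} : InDeltaPhi φ k G → InDeltaPhi φ k (fun bs => (G bs)ᶜ)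
  | union {k : ℕ} {G H} : InDeltaPhi φ k G → InDeltaPhi φ k H →
      InDeltaPhi φ k (fun bs => G bs ∪ H bs)

/-- `μ` is definable over `M` (Definition 4.11): for every `θ(x;ȳ) ∈ Δ_φ` and `ε > 0` there
is a partition of `U^ȳ` into `M`-definable pieces on which `μ(θ(x;·))` varies less than `ε`. -/
def DefinableOver {U : Type} [L.Structure U] {nx ny : ℕ}
    (φ : L.Formula (Fin nx ⊕ Fin ny)) (M : L.ElementarySubstructure U)
    (μ : KeislerMeasure U φ) : Prop :=
  ∀ (k : ℕ) (G : (Fin k → Fin ny → U) → Set (Fin nx → U)), InDeltaPhi φ k G →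
    ∀ ε : ℝ, 0 < ε →
      ∃ (m j : ℕ) (ρ : Fin m → L.Formula ((Fin k × Fin ny) ⊕ Fin j)) (c : Fin j → M),
        (∀ bs : Fin k → Fin ny → U, ∃! i : Fin m,
          (ρ i).Realize (Sum.elim (fun q => bs q.1 q.2) (fun t => (c t : U)))) ∧
        ∀ i : Fin m, ∀ e e' : Fin k → Fin ny → U,
          (ρ i).Realize (Sum.elim (fun q => e q.1 q.2) (fun t => (c t : U))) →
          (ρ i).Realize (Sum.elim (fun q => e' q.1 q.2) (fun t => (c t : U))) →
          |μ.toFun (G e) - μ.toFun (G e')| < ε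

/-- `μ` is generically stable over `M` (Definition 4.11). -/
def GenericallyStable {U : Type} [L.Structure U] {nx ny : ℕ}
    (φ : L.Formula (Fin nx ⊕ Fin ny)) (M : L.ElementarySubstructure U)
    (μ : KeislerMeasure U φ) : Prop :=
  DefinableOver φ M μ ∧ FinSat φ M μ

/-- The average measure `Av(ā)` of the finite sequence `ā = (a_1, ..., a_n)`. -/
noncomputable def Av {α : Type*} {n : ℕ} (a : Fin n → α) (s : Set α) : ℝ :=
  (∑ i : Fin n, Set.indicator s (fun _ => (1 : ℝ)) (a i)) / n

/-- `μ` is finitely approximable over `M` (Definition 4.12). -/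
def FinApprox {U : Type} [L.Structure U] {nx ny : ℕ}
    (φ : L.Formula (Fin nx ⊕ Fin ny)) (M : L.ElementarySubstructure U)
    (μ : KeislerMeasure U φ) : Prop :=
  ∀ (k : ℕ) (G : (Fin k → Fin ny → U) → Set (Fin nx → U)), InDeltaPhi φ k G →
    ∀ ε : ℝ, 0 < ε → ∃ (n : ℕ), 0 < n ∧ ∃ a : Fin n → (Fin nx → M),
      ∀ bs : Fin k → Fin ny → U,
        |μ.toFun (G bs) - Av (fun i => fun q => ((a i q : U))) (G bs)| < ε

/-! ### Convexity and dependence notions -/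

/-- The set of all finite rational convex combinations of elements of `A`. -/
def ratConv {E : Type*} [AddCommMonoid E] [Module ℝ E] (A : Set E) : Set E :=
  { z | ∃ (n : ℕ) (r : Fin n → ℚ) (v : Fin n → E),
      (∀ i, 0 < r i) ∧ (∑ i, ((r i : ℝ))) = 1 ∧ (∀ i, v i ∈ A) ∧ z = ∑ i, ((r i : ℝ)) • v i }

/-- A two-variable map `g : X × Y → ℝ` is `(r,ε)`-independent if for every `n` there is a
set `A ⊆ X` with `|A| > n` which `g` `(r,ε)`-shatters; `g` is independent if it is
`(r,ε)`-independent for some `r ∈ (0,1)` and `ε > 0`, and dependent otherwise. -/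
def MapIndependent {X Y : Type*} (g : X → Y → ℝ) : Prop :=
  ∃ r : ℝ, r ∈ Set.Ioo (0 : ℝ) 1 ∧ ∃ ε : ℝ, 0 < ε ∧
    ∀ n : ℕ, ∃ A : Finset X, n < A.card ∧
      ∀ K ⊆ A, ∃ b : Y, ∀ a ∈ A, (g a b ≤ r ↔ a ∈ K) ∧ (r + ε ≤ g a b ↔ a ∉ K)

/-- A set `A ⊆ ℝ^Y` is sequentially independent if there are a sequence `(f_n)` of elements
of `A`, a real `r`, and `ε > 0` such that for every `I ⊆ ℕ` there is `b_I ∈ Y` with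
`{n : f_n(b_I) ≤ r} = I` and `{n : f_n(b_I) ≥ r + ε} = ℕ ∖ I`. -/
def SeqIndependent {Y : Type*} (A : Set (Y → ℝ)) : Prop :=
  ∃ f : ℕ → (Y → ℝ), (∀ n, f n ∈ A) ∧ ∃ r ε : ℝ, 0 < ε ∧
    ∀ I : Set ℕ, ∃ b : Y, {n : ℕ | f n b ≤ r} = I ∧ {n : ℕ | r + ε ≤ f n b} = Iᶜ

/-! ### Thinning a sample -/

/-- Choosing one index from each pair in `ι × Bool` at random, the sum of a bounded vector `w` over
the chosen indices is at least half of its total sum, up to `|ι| δ`, simultaneously for all `w ∈ W`,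
provided `W` is not too large. This is a Chernoff bound followed by a union bound, with
expectations written as sums over all choices `σ`. -/
theorem halving {ι : Type*} [Fintype ι] (W : Finset (ι × Bool → ℝ))
    (hW : ∀ w ∈ W, ∀ p, |w p| ≤ 1) (δ : ℝ) (hδ : 0 ≤ δ)
    (hcard : (W.card : ℝ) * Real.exp (-((Fintype.card ι : ℝ) * δ ^ 2 / 2)) < 1) :
    ∃ σ : ι → Bool, ∀ w ∈ W,
      (∑ p, w p) / 2 - (Fintype.card ι : ℝ) * δ ≤ ∑ i, w (i, σ i) := by
  classical
  by_contra hcon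
  push Not at hcon
  obtain ⟨n, hn⟩ : ∃ n : ℝ, n = (Fintype.card ι : ℝ) := ⟨_, rfl⟩
  rw [← hn] at hcard
  simp only [← hn] at hcon
  -- the deficit at `i` of choosing `b`; it has mean zero over `b`
  let d : (ι × Bool → ℝ) → ι → Bool → ℝ := fun w i b =>
    (w (i, false) + w (i, true)) / 2 - w (i, b)
  have hd : ∀ w (σ : ι → Bool),
      ∑ i, d w i (σ i) = (∑ p, w p) / 2 - ∑ i, w (i, σ i) := by
    intro w σ
    simp only [d, Finset.sum_sub_distrib, Fintype.sum_prod_type, Fintype.sum_bool,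
      Finset.sum_div]
    congr 1
    exact Finset.sum_congr rfl fun i _ => by rw [add_comm]
  -- a failing choice `σ` has some `w` with exponential moment at least `exp (n δ²)`
  have hlow : ∀ σ : ι → Bool,
      Real.exp (n * δ ^ 2) ≤ ∑ w ∈ W, Real.exp (δ * ∑ i, d w i (σ i)) := by
    intro σ
    obtain ⟨w, hw, hlt⟩ := hcon σ
    refine le_trans ?_ (Finset.single_le_sum
      (f := fun w => Real.exp (δ * ∑ i, d w i (σ i))) (fun _ _ => (Real.exp_pos _).le) hw)
    apply Real.exp_le_exp.2
    rw [hd]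
    nlinarith
  -- the deficits are independent and centred, so `cosh x ≤ exp (x² / 2)` bounds the moment
  have hup : ∀ w ∈ W, ∑ σ : ι → Bool, Real.exp (δ * ∑ i, d w i (σ i)) ≤
      (∏ _i : ι, (2 : ℝ)) * Real.exp (n * δ ^ 2 / 2) := by
    intro w hw
    have h1 : ∑ σ : ι → Bool, Real.exp (δ * ∑ i, d w i (σ i)) =
        ∏ i, ∑ b : Bool, Real.exp (δ * d w i b) := by
      rw [Finset.prod_univ_sum]
      simp only [Fintype.piFinset_univ, Finset.mul_sum, Real.exp_sum]
    have h2 : Real.exp (n * δ ^ 2 / 2) = ∏ _i : ι, Real.exp (δ ^ 2 / 2) := by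
      rw [← Real.exp_sum, Finset.sum_const, Finset.card_univ, nsmul_eq_mul, ← hn]
      congr 1
      ring
    rw [h1, h2, ← Finset.prod_mul_distrib]
    refine Finset.prod_le_prod (fun i _ => Finset.sum_nonneg fun _ _ => (Real.exp_pos _).le)
      fun i _ => ?_
    have h3 : ∑ b : Bool, Real.exp (δ * d w i b) =
        2 * Real.cosh (δ * ((w (i, false) - w (i, true)) / 2)) := by
      rw [Real.cosh_eq, mul_div_cancel₀ _ two_ne_zero, Fintype.sum_bool]
      simp only [d]
      congr 2 <;> ring
    rw [h3]
    refine mul_le_mul_of_nonneg_left ((Real.cosh_le_exp_half_sq _).trans ?_) (by norm_num)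
    apply Real.exp_le_exp.2
    have a1 := abs_le.1 (hW w hw (i, false))
    have a2 := abs_le.1 (hW w hw (i, true))
    have h4 : ((w (i, false) - w (i, true)) / 2) ^ 2 ≤ 1 := by
      rw [sq_le_one_iff_abs_le_one, abs_le]
      constructor <;> linarith
    rw [mul_pow]
    nlinarith [sq_nonneg δ]
  have hsum : (∏ _i : ι, (2 : ℝ)) * Real.exp (n * δ ^ 2) ≤
      W.card * ((∏ _i : ι, (2 : ℝ)) * Real.exp (n * δ ^ 2 / 2)) := by
    calc (∏ _i : ι, (2 : ℝ)) * Real.exp (n * δ ^ 2)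
        = ∑ _σ : ι → Bool, Real.exp (n * δ ^ 2) := by simp
      _ ≤ ∑ σ : ι → Bool, ∑ w ∈ W, Real.exp (δ * ∑ i, d w i (σ i)) :=
          Finset.sum_le_sum fun σ _ => hlow σ
      _ = ∑ w ∈ W, ∑ σ : ι → Bool, Real.exp (δ * ∑ i, d w i (σ i)) := Finset.sum_comm
      _ ≤ ∑ _w ∈ W, (∏ _i : ι, (2 : ℝ)) * Real.exp (n * δ ^ 2 / 2) :=
          Finset.sum_le_sum hup
      _ = _ := by rw [Finset.sum_const, nsmul_eq_mul]
  have h2 : (0 : ℝ) < ∏ _i : ι, (2 : ℝ) := Finset.prod_pos fun _ _ => by norm_num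
  have hE : Real.exp (n * δ ^ 2) = Real.exp (n * δ ^ 2 / 2) * Real.exp (n * δ ^ 2 / 2) := by
    rw [← Real.exp_add]; congr 1; ring
  have hE' : Real.exp (-(n * δ ^ 2 / 2)) * Real.exp (n * δ ^ 2 / 2) = 1 := by
    rw [← Real.exp_add]; simp
  have hpos := Real.exp_pos (n * δ ^ 2 / 2)
  have h3 : Real.exp (n * δ ^ 2 / 2) ≤ W.card := by
    rw [hE] at hsum
    have : ((∏ _i : ι, (2 : ℝ)) * Real.exp (n * δ ^ 2 / 2)) * Real.exp (n * δ ^ 2 / 2) ≤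
      ((∏ _i : ι, (2 : ℝ)) * Real.exp (n * δ ^ 2 / 2)) * W.card := by linarith
    exact le_of_mul_le_mul_left this (by positivity)
  have := Real.exp_pos (-(n * δ ^ 2 / 2))
  nlinarith

/-- The hypothesis of `halving` holds at every large level `j`, for polynomially many vectors and
error `(3/4)^j`: the exponent is `(2 · 9/16)^j / 2 = (9/8)^j / 2`, which beats any polynomial in
`2^j`. -/
theorem eventually_growth (C d : ℕ) : ∀ᶠ j : ℕ in atTop,
    ((C * 2 ^ (j + 1) + 1 : ℕ) : ℝ) ^ d *
      Real.exp (-(2 ^ j * ((3 / 4 : ℝ) ^ j) ^ 2 / 2)) < 1 := by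
  have hr : (1 : ℝ) < 9 / 8 := by norm_num
  have t0 := tendsto_pow_const_div_const_pow_of_one_lt 0 hr
  have t1 := tendsto_pow_const_div_const_pow_of_one_lt 1 hr
  have t2 : Tendsto (fun j : ℕ => (d * Real.log (2 * C + 1) : ℝ) * ((j : ℝ) ^ 0 / (9 / 8) ^ j)
      + (d * Real.log 2) * ((j : ℝ) ^ 1 / (9 / 8) ^ j)) atTop (𝓝 0) := by
    simpa using (t0.const_mul (d * Real.log (2 * C + 1) : ℝ)).add
      (t1.const_mul (d * Real.log 2 : ℝ))
  filter_upwards [t2.eventually (gt_mem_nhds (show (0 : ℝ) < 1 / 2 by norm_num))] with j hj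
  have hq : (0 : ℝ) < (9 / 8) ^ j := by positivity
  have e1 : (2 : ℝ) ^ j * ((3 / 4 : ℝ) ^ j) ^ 2 = (9 / 8) ^ j := by
    rw [← pow_mul, mul_comm j 2, pow_mul, ← mul_pow]; norm_num
  rw [e1]
  have hle : ((C * 2 ^ (j + 1) + 1 : ℕ) : ℝ) ≤
      Real.exp (Real.log (2 * C + 1) + j * Real.log 2) := by
    rw [Real.exp_add, Real.exp_log (by positivity), mul_comm (j : ℝ), Real.exp_mul,
      Real.exp_log (by norm_num), Real.rpow_natCast]
    push_cast
    have : (1 : ℝ) ≤ 2 ^ j := one_le_pow₀ (by norm_num)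
    rw [pow_succ]
    nlinarith
  calc _ ≤ Real.exp (Real.log (2 * C + 1) + j * Real.log 2) ^ d
        * Real.exp (-((9 / 8 : ℝ) ^ j / 2)) := by gcongr
    _ = Real.exp (d * (Real.log (2 * C + 1) + j * Real.log 2) + -((9 / 8 : ℝ) ^ j / 2)) := by
        rw [← Real.exp_nat_mul, Real.exp_add]
    _ < 1 := by
        rw [Real.exp_lt_one_iff]
        have h := mul_lt_mul_of_pos_right hj hq
        have h' : ((d * Real.log (2 * C + 1) : ℝ) * ((j : ℝ) ^ 0 / (9 / 8) ^ j)
          + (d * Real.log 2) * ((j : ℝ) ^ 1 / (9 / 8) ^ j)) * (9 / 8) ^ j =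
          d * (Real.log (2 * C + 1) + j * Real.log 2) := by
          field_simp
        rw [h'] at h
        linarith

/-- The arithmetic mean of a list of length `2 ^ K`. -/
noncomputable def dyadicMean {E : Type*} [AddCommGroup E] [Module ℝ E] {K : ℕ}
    (v : Fin (2 ^ K) → E) : E :=
  ((2 : ℝ) ^ K)⁻¹ • ∑ i, v i

theorem thinning_step {α Z : Type*} (H : α → Z → ℝ) (hH : ∀ a z, |H a z| ≤ 1) (C d K : ℕ)
    (hgrowth : ∀ (n : ℕ) (z : Fin n → Z), ∃ W : Finset (Fin n → ℝ),
      (∀ a, (fun i => H a (z i)) ∈ W) ∧ W.card ≤ (C * n + 1) ^ d)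
    (hK : ((C * 2 ^ (K + 1) + 1 : ℕ) : ℝ) ^ d *
      Real.exp (-(2 ^ K * ((3 / 4 : ℝ) ^ K) ^ 2 / 2)) < 1) (z : Fin (2 ^ (K + 1)) → Z) :
    ∃ z' : Fin (2 ^ K) → Z, ∀ a,
      dyadicMean (fun i => H a (z i)) - (3 / 4) ^ K ≤ dyadicMean (fun i => H a (z' i)) := by
  classical
  obtain ⟨W, hW, hc⟩ := hgrowth _ z
  let e : Fin (2 ^ K) × Bool ≃ Fin (2 ^ (K + 1)) :=
    Fintype.equivOfCardEq (by simp [pow_succ])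
  let W' : Finset (Fin (2 ^ K) × Bool → ℝ) :=
    (W.filter fun w => ∀ i, |w i| ≤ 1).image fun w => w ∘ e
  have hc' : W'.card ≤ (C * 2 ^ (K + 1) + 1) ^ d :=
    (Finset.card_image_le.trans (Finset.card_filter_le _ _)).trans hc
  obtain ⟨σ, hσ⟩ := halving W' (by
      intro w hw p
      obtain ⟨w', hw', rfl⟩ := Finset.mem_image.1 hw
      exact (Finset.mem_filter.1 hw').2 _) ((3 / 4) ^ K) (by positivity) (by
      refine lt_of_le_of_lt ?_ hK
      rw [Fintype.card_fin]
      push_cast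
      gcongr
      exact_mod_cast hc')
  refine ⟨fun i => z (e (i, σ i)), fun a => ?_⟩
  have h := hσ ((fun i => H a (z i)) ∘ e) (Finset.mem_image_of_mem _
    (Finset.mem_filter.2 ⟨hW a, fun i => hH _ _⟩))
  simp only [Function.comp] at h
  rw [e.sum_comp (fun i => H a (z i)), Fintype.card_fin] at h
  simp only [dyadicMean, smul_eq_mul]
  push_cast at h
  have h2 : (0 : ℝ) < 2 ^ K := by positivity
  rw [inv_mul_eq_div, inv_mul_eq_div, le_div_iff₀ h2, pow_succ (2 : ℝ), sub_mul]
  refine le_trans (le_of_eq ?_) h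
  field_simp

/-- A uniform law of large numbers for families with polynomially many traces: a list `z` of length
`2 ^ K` can be replaced by one of length `2 ^ k₀` without decreasing the mean of any `H a` by more
than `δ`. The length `2 ^ k₀` depends only on the growth rate and on `δ`. Halving is iterated down
to level `k₀`; the errors `(3/4)^j` sum to less than `4 (3/4)^k₀`. -/
theorem thinning (C d : ℕ) (δ : ℝ) (hδ : 0 < δ) : ∃ k₀ : ℕ,
    ∀ {α Z : Type} (H : α → Z → ℝ), (∀ a z, |H a z| ≤ 1) →
    (∀ (n : ℕ) (z : Fin n → Z), ∃ W : Finset (Fin n → ℝ),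
      (∀ a, (fun i => H a (z i)) ∈ W) ∧ W.card ≤ (C * n + 1) ^ d) →
    ∀ K, k₀ ≤ K → ∀ z : Fin (2 ^ K) → Z, ∃ z' : Fin (2 ^ k₀) → Z, ∀ a,
      dyadicMean (fun i => H a (z i)) - δ ≤ dyadicMean (fun i => H a (z' i)) := by
  obtain ⟨k₁, hk₁⟩ := eventually_atTop.1 (eventually_growth C d)
  have hlim : Tendsto (fun k : ℕ => 4 * (3 / 4 : ℝ) ^ k) atTop (𝓝 0) := by
    simpa using (tendsto_pow_atTop_nhds_zero_of_lt_one (r := (3 / 4 : ℝ)) (by norm_num)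
      (by norm_num)).const_mul 4
  obtain ⟨k₂, hk₂⟩ := eventually_atTop.1 (hlim.eventually (gt_mem_nhds hδ))
  refine ⟨max k₁ k₂, fun {α Z} H hH hg => ?_⟩
  set k₀ := max k₁ k₂ with hk₀
  have key : ∀ K, k₀ ≤ K → ∀ z : Fin (2 ^ K) → Z, ∃ z' : Fin (2 ^ k₀) → Z, ∀ a,
      dyadicMean (fun i => H a (z i)) - (4 * (3 / 4) ^ k₀ - 4 * (3 / 4) ^ K) ≤
        dyadicMean (fun i => H a (z' i)) := by
    intro K hK
    induction K, hK using Nat.le_induction with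
    | base => exact fun z => ⟨z, fun a => by simp⟩
    | succ K hK ih =>
      intro z
      obtain ⟨z₁, hz₁⟩ := thinning_step H hH C d K hg
        (hk₁ K ((le_max_left _ _).trans hK)) z
      obtain ⟨z₂, hz₂⟩ := ih z₁
      refine ⟨z₂, fun a => ?_⟩
      have h1 := hz₁ a
      have h2 := hz₂ a
      rw [pow_succ (3 / 4 : ℝ) K]
      linarith
  intro K hK z
  obtain ⟨z', hz'⟩ := key K hK z
  refine ⟨z', fun a => ?_⟩
  have h1 := hz' a
  have h2 := hk₂ k₀ (le_max_right _ _)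
  have h3 : (0 : ℝ) ≤ (3 / 4) ^ K := by positivity
  linarith

/-! ### Convex hulls and separation -/

theorem dyadicMean_concat {E : Type*} [AddCommGroup E] [Module ℝ E] {S : Set E} {K : ℕ}
    (v w : Fin (2 ^ K) → E) (hv : ∀ i, v i ∈ S) (hw : ∀ i, w i ∈ S) :
    ∃ u : Fin (2 ^ (K + 1)) → E, (∀ i, u i ∈ S) ∧
      dyadicMean u = (2 : ℝ)⁻¹ • (dyadicMean v + dyadicMean w) := by
  let e : Fin (2 ^ (K + 1)) ≃ Fin (2 ^ K) × Bool :=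
    Fintype.equivOfCardEq (by simp [pow_succ])
  let f : Fin (2 ^ K) × Bool → E := fun p => if p.2 then v p.1 else w p.1
  refine ⟨f ∘ e, fun i => ?_, ?_⟩
  · simp only [Function.comp, f]
    split_ifs
    exacts [hv _, hw _]
  · simp only [dyadicMean, Function.comp]
    rw [e.sum_comp f, Fintype.sum_prod_type]
    simp only [Fintype.sum_bool, f, Finset.sum_add_distrib, if_true, Bool.false_eq_true, if_false]
    rw [← smul_add, smul_smul, pow_succ, mul_inv_rev]

theorem convex_of_isClosed_of_midpoint {E : Type*} [AddCommGroup E] [Module ℝ E]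
    [TopologicalSpace E] [ContinuousAdd E] [ContinuousSMul ℝ E] {D : Set E}
    (hD : IsClosed D) (hmid : ∀ x ∈ D, ∀ y ∈ D, (2 : ℝ)⁻¹ • (x + y) ∈ D) : Convex ℝ D := by
  rw [convex_iff_forall_pos]
  intro x hx y hy a t ha ht hat
  obtain rfl : a = 1 - t := by linarith
  let g : ℝ → E := fun t => (1 - t) • x + t • y
  have hg : Continuous g := by fun_prop
  have hdy : ∀ n k : ℕ, k ≤ 2 ^ n → g (k / 2 ^ n) ∈ D := by
    intro n
    induction n with
    | zero =>
      intro k hk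
      obtain rfl | rfl : k = 0 ∨ k = 1 := by simp at hk; omega
      · simpa [g] using hx
      · simpa [g] using hy
    | succ n ih =>
      intro k hk
      rw [pow_succ] at hk
      rcases Nat.even_or_odd' k with ⟨m, rfl | rfl⟩
      · have := ih m (by omega)
        convert this using 2
        push_cast
        field_simp
        ring
      · have := hmid _ (ih m (by omega)) _ (ih (m + 1) (by omega))
        convert this using 1
        simp only [g]
        push_cast
        module
  have hlim : Tendsto (fun n : ℕ => ((⌊t * (2 : ℝ) ^ n⌋₊ : ℝ) / 2 ^ n)) atTop (𝓝 t) :=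
    (tendsto_nat_floor_mul_div_atTop ht.le).comp
      (tendsto_pow_atTop_atTop_of_one_lt (by norm_num : (1 : ℝ) < 2))
  refine hD.mem_of_tendsto ((hg.tendsto t).comp hlim) (Eventually.of_forall fun n => ?_)
  refine hdy n _ (Nat.floor_le_of_le ?_)
  push_cast
  have : (0 : ℝ) < 2 ^ n := by positivity
  nlinarith

/-- Means of lists of length `2 ^ K`, with `K ≥ k₀`, of elements of `S` are dense in the convex hull
of `S`. -/
theorem exists_dyadicMean_mem {E : Type*} [AddCommGroup E] [Module ℝ E]
    [TopologicalSpace E] [ContinuousAdd E] [ContinuousSMul ℝ E] {S O : Set E} {x : E}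
    (hx : x ∈ convexHull ℝ S) (hO : IsOpen O) (hxO : x ∈ O) (k₀ : ℕ) :
    ∃ K, k₀ ≤ K ∧ ∃ v : Fin (2 ^ K) → E, (∀ i, v i ∈ S) ∧ dyadicMean v ∈ O := by
  let P : ℕ → E → Prop := fun K w => ∃ v : Fin (2 ^ K) → E, (∀ i, v i ∈ S) ∧ dyadicMean v = w
  have hup : ∀ K K' w, K ≤ K' → P K w → P K' w := by
    intro K K' w hKK' h
    induction K', hKK' using Nat.le_induction with
    | base => exact h
    | succ K' _ ih =>
      obtain ⟨v, hv, hvw⟩ := ih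
      obtain ⟨u, hu, huw⟩ := dyadicMean_concat v v hv hv
      refine ⟨u, hu, ?_⟩
      rw [huw, hvw]
      module
  let W : Set E := {w | ∃ K, k₀ ≤ K ∧ P K w}
  have hWmid : ∀ w ∈ W, ∀ w' ∈ W, (2 : ℝ)⁻¹ • (w + w') ∈ W := by
    rintro w ⟨K, hK, hw⟩ w' ⟨K', hK', hw'⟩
    obtain ⟨v, hv, rfl⟩ := hup K (max K K') w (le_max_left _ _) hw
    obtain ⟨v', hv', rfl⟩ := hup K' (max K K') w' (le_max_right _ _) hw'
    obtain ⟨u, hu, huw⟩ := dyadicMean_concat v v' hv hv'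
    exact ⟨_, (hK.trans (le_max_left _ _)).trans (Nat.le_succ _), u, hu, huw⟩
  have hconv : Convex ℝ (closure W) := by
    refine convex_of_isClosed_of_midpoint isClosed_closure fun y hy y' hy' => ?_
    exact map_mem_closure₂ (f := fun y y' : E => (2 : ℝ)⁻¹ • (y + y')) (by fun_prop)
      hy hy' hWmid
  have hSW : S ⊆ closure W := by
    intro s hs
    refine subset_closure ⟨k₀, le_rfl, fun _ => s, fun _ => hs, ?_⟩
    simp only [dyadicMean, Finset.sum_const, Finset.card_univ, Fintype.card_fin]
    rw [← Nat.cast_smul_eq_nsmul ℝ, smul_smul]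
    push_cast
    rw [inv_mul_cancel₀ (by positivity), one_smul]
  obtain ⟨w, hwO, K, hK, v, hv, rfl⟩ :=
    mem_closure_iff.1 (convexHull_min hSW hconv hx) O hO hxO
  exact ⟨K, hK, v, hv, hwO⟩

/-- An alternative for the game with payoff `h`, where `I` is finite: either some mixed strategy on
`I` keeps the payoff at most `δ` against every `p`, or some list from `P` has mean payoff greater
than `δ` against every `a`. The first case arises by separating the open orthant `(δ, ∞)^I` from
the convex hull of the payoff vectors. -/
theorem minimax {I P : Type*} [Fintype I] [Nonempty I] [Nonempty P] (h : I → P → ℝ) (δ : ℝ) :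
    (∃ l : I → ℝ, (∀ a, 0 ≤ l a) ∧ ∑ a, l a = 1 ∧ ∀ p, ∑ a, l a * h a p ≤ δ) ∨
    ∀ k₀ : ℕ, ∃ K, k₀ ≤ K ∧ ∃ z : Fin (2 ^ K) → P, ∀ a,
      δ < dyadicMean (fun i => h a (z i)) := by
  classical
  let V : Set (I → ℝ) := Set.range fun p a => h a p
  let O : Set (I → ℝ) := Set.univ.pi fun _ => Set.Ioi δ
  have hO : IsOpen O := isOpen_set_pi finite_univ fun _ _ => isOpen_Ioi
  by_cases hdisj : Disjoint O (convexHull ℝ V)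
  · left
    obtain ⟨f, u, hfO, hfV⟩ := geometric_hahn_banach_open
      (convex_pi fun _ _ => convex_Ioi δ) hO (convex_convexHull ℝ V) hdisj
    let c : I → ℝ := fun a => f (Pi.single a 1)
    have hf : ∀ w, f w = ∑ a, w a * c a := by
      intro w
      conv_lhs => rw [pi_eq_sum_univ' w]
      simp only [map_sum, map_smul, smul_eq_mul, c]
    have hfv : ∀ p, u ≤ ∑ a, h a p * c a := fun p => by
      rw [← hf fun a => h a p]
      exact hfV _ (subset_convexHull ℝ V ⟨p, rfl⟩)
    have hfo : ∀ w : I → ℝ, (∀ a, δ < w a) → ∑ a, w a * c a < u := fun w hw => by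
      rw [← hf]
      exact hfO _ fun a _ => hw a
    -- `f` is bounded above on an orthant, so its coefficients are nonpositive
    have hc : ∀ a, c a ≤ 0 := by
      intro a
      by_contra hpos
      push Not at hpos
      obtain ⟨t, ht, hut⟩ : ∃ t : ℝ, 0 ≤ t ∧ u ≤ ∑ b, (δ + 1) * c b + t * c a := by
        refine ⟨max 0 ((u - ∑ b, (δ + 1) * c b) / c a), le_max_left _ _, ?_⟩
        have := mul_le_mul_of_nonneg_right
          (le_max_right 0 ((u - ∑ b, (δ + 1) * c b) / c a)) hpos.le
        rw [div_mul_cancel₀ _ hpos.ne'] at this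
        linarith
      have := hfo (fun b => δ + 1 + if b = a then t else 0) (fun b => by
        split_ifs <;> linarith)
      simp only [add_mul _ (ite _ _ _), Finset.sum_add_distrib, ite_mul, zero_mul,
        Finset.sum_ite_eq', Finset.mem_univ, if_true] at this
      linarith
    obtain ⟨p₀⟩ := ‹Nonempty P›
    have hs0 : ∑ a, c a < 0 := by
      refine lt_of_le_of_ne (Finset.sum_nonpos fun a _ => hc a) fun h0 => ?_
      have hz : ∀ a, c a = 0 := fun a =>
        (Finset.sum_eq_zero_iff_of_nonpos fun a _ => hc a).1 h0 a (Finset.mem_univ a)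
      have h1 := hfv p₀
      have h2 := hfo (fun _ => δ + 1) (fun _ => by linarith)
      simp only [hz, mul_zero, Finset.sum_const_zero] at h1 h2
      linarith
    set s := ∑ a, c a with hs
    refine ⟨fun a => c a / s, fun a => div_nonneg_of_nonpos (hc a) hs0.le, ?_, fun p => ?_⟩
    · rw [← Finset.sum_div, div_self hs0.ne]
    · have h1 : δ * s ≤ ∑ a, h a p * c a := by
        refine le_trans ?_ (hfv p)
        refine le_of_forall_pos_lt_add fun η hη => ?_
        have h2 := hfo (fun _ => δ + η / (-s)) (fun _ => by
          have := div_pos hη (neg_pos.2 hs0)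
          linarith)
        rw [← Finset.mul_sum, ← hs, add_mul] at h2
        have : η / (-s) * s = -η := by field_simp [hs0.ne]
        linarith
      have h2 : ∑ a, c a / s * h a p = (∑ a, h a p * c a) / s := by
        rw [Finset.sum_div]
        exact Finset.sum_congr rfl fun a _ => by ring
      rw [h2]
      exact (div_le_iff_of_neg hs0).2 h1
  · right
    intro k₀
    obtain ⟨w, hwO, hwV⟩ := Set.not_disjoint_iff.1 hdisj
    obtain ⟨K, hK, v, hv, hm⟩ := exists_dyadicMean_mem hwV hO hwO k₀
    choose z hz using hv
    refine ⟨K, hK, z, fun a => ?_⟩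
    have := hm a (Set.mem_univ a)
    refine lt_of_lt_of_eq (Set.mem_Ioi.1 this) ?_
    simp only [dyadicMean, Pi.smul_apply, Finset.sum_apply]
    congr 1
    exact Finset.sum_congr rfl fun i _ => (congrFun (hz i) a).symm

/-! ### Polynomial growth of traces under NIP -/

theorem sum_choose_Iic_le (n v : ℕ) : ∑ i ∈ Finset.Iic v, n.choose i ≤ (n + 1) ^ v := by
  induction v with
  | zero => rw [← Nat.range_succ_eq_Iic]; simp
  | succ v ih =>
    rw [← Nat.range_succ_eq_Iic, Finset.sum_range_succ, Nat.range_succ_eq_Iic, pow_succ]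
    have h1 : n.choose (v + 1) ≤ n ^ (v + 1) := Nat.choose_le_pow _ _
    have h2 : n ^ v ≤ (n + 1) ^ v := Nat.pow_le_pow_left (Nat.le_succ n) v
    rw [pow_succ] at h1
    nlinarith

open Classical in
/-- If `φ` is NIP, then a finite family of `m` instances of `φ` cuts out at most polynomially many
(in `m`) traces. If the traces shattered a set of more than `2 ^ N` parameters, then choosing
distinct parameters indexed by the subsets `K` of `Fin N`, and points `a i` satisfying exactly the
instances with `i ∈ K`, would give a set of `N` points shattered by `φ`. The bound is then the
Sauer-Shelah lemma. -/
theorem exists_traces {U : Type} [L.Structure U] {nx ny : ℕ}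
    {φ : L.Formula (Fin nx ⊕ Fin ny)} (hNIP : FormulaIsNIP U φ) :
    ∃ d : ℕ, ∀ (ι : Type) [Fintype ι] (b : ι → Fin ny → U),
      ∃ 𝒜 : Finset (Finset ι),
        (∀ a : Fin nx → U, (Finset.univ.filter fun i => a ∈ phiSet φ (b i)) ∈ 𝒜) ∧
        𝒜.card ≤ (Fintype.card ι + 1) ^ d := by
  unfold FormulaIsNIP FormulaHasIP at hNIP
  push Not at hNIP
  obtain ⟨N, hN⟩ := hNIP
  refine ⟨2 ^ N, fun ι _ b => ?_⟩
  let tr : (Fin nx → U) → Finset ι := fun a => Finset.univ.filter fun i => a ∈ phiSet φ (b i)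
  let 𝒜 : Finset (Finset ι) := Finset.univ.filter fun t => ∃ a, tr a = t
  refine ⟨𝒜, fun a => ?_, ?_⟩
  · simp only [𝒜, Finset.mem_filter, Finset.mem_univ, true_and]
    exact ⟨a, rfl⟩
  have hvc : 𝒜.vcDim ≤ 2 ^ N := by
    refine Finset.sup_le fun s hs => ?_
    rw [Finset.mem_shatterer] at hs
    by_contra hlt
    push Not at hlt
    obtain ⟨e⟩ : Nonempty (Finset (Fin N) ↪ s) :=
      Function.Embedding.nonempty_of_card_le (by simpa using hlt.le)
    have ha : ∀ i : Fin N, ∃ a : Fin nx → U, ∀ K : Finset (Fin N),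
        a ∈ phiSet φ (b (e K)) ↔ i ∈ K := by
      intro i
      obtain ⟨u, hu, hsu⟩ := hs (t := (Finset.univ.filter fun K => i ∈ K).image
        fun K => (e K : ι)) (by
          intro x hx
          obtain ⟨K, -, rfl⟩ := Finset.mem_image.1 hx
          exact (e K).2)
      obtain ⟨a, rfl⟩ := (Finset.mem_filter.1 hu).2
      refine ⟨a, fun K => ?_⟩
      have h1 : a ∈ phiSet φ (b (e K)) ↔ (e K : ι) ∈ s ∩ tr a := by
        simp [tr]
      rw [h1, hsu]
      simp
    choose a ha using ha
    have hinj : Function.Injective a := by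
      intro i j hij
      have h1 := (ha i {i}).2 (by simp)
      rw [hij] at h1
      exact (Finset.mem_singleton.1 ((ha j {i}).1 h1)).symm
    obtain ⟨K, hK, hbad⟩ := hN (Finset.univ.image a)
      (by rw [Finset.card_image_of_injective _ hinj]; simp)
    obtain ⟨c, hc, hc'⟩ := hbad (b (e (Finset.univ.filter fun i => a i ∈ K)))
    obtain ⟨i, -, rfl⟩ := Finset.mem_image.1 hc
    have h1 := ha i (Finset.univ.filter fun i => a i ∈ K)
    simp only [Finset.mem_filter, Finset.mem_univ, true_and] at h1
    have h2 : φ.Realize (Sum.elim (a i) (b (e (Finset.univ.filter fun i => a i ∈ K)))) ↔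
      a i ∈ K := h1
    tauto
  calc 𝒜.card ≤ 𝒜.shatterer.card := Finset.card_le_card_shatterer 𝒜
    _ ≤ ∑ k ∈ Finset.Iic 𝒜.vcDim, (Fintype.card ι).choose k :=
        Finset.card_shatterer_le_sum_vcDim
    _ ≤ (Fintype.card ι + 1) ^ 𝒜.vcDim := sum_choose_Iic_le _ _
    _ ≤ _ := Nat.pow_le_pow_right (Nat.succ_pos _) hvc

/-- Membership in an instance of a formula in `Δ_φ` depends only on the instances of `φ` that it is
built from. -/
theorem InDeltaPhi.mem_iff {U : Type} [L.Structure U] {nx ny : ℕ}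
    {φ : L.Formula (Fin nx ⊕ Fin ny)} {k : ℕ} {G : (Fin k → Fin ny → U) → Set (Fin nx → U)}
    (hG : InDeltaPhi φ k G) {a a' : Fin nx → U} {bs : Fin k → Fin ny → U}
    (h : ∀ j, a ∈ phiSet φ (bs j) ↔ a' ∈ phiSet φ (bs j)) : a ∈ G bs ↔ a' ∈ G bs := by
  induction hG with
  | inst j => exact h j
  | empty => exact Iff.rfl
  | compl _ ih => exact not_congr ih
  | union _ _ ih ih' => exact or_congr ih ih'

theorem InDeltaPhi.inPhiAlg {U : Type} [L.Structure U] {nx ny : ℕ}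
    {φ : L.Formula (Fin nx ⊕ Fin ny)} {k : ℕ} {G : (Fin k → Fin ny → U) → Set (Fin nx → U)}
    (hG : InDeltaPhi φ k G) (bs : Fin k → Fin ny → U) : InPhiAlg φ (G bs) := by
  induction hG with
  | inst j => exact .basic _
  | empty => exact .empty
  | compl _ ih => exact .compl ih
  | union _ _ ih ih' => exact .union ih ih'

theorem InDeltaPhi.reindex {U : Type} [L.Structure U] {nx ny : ℕ}
    {φ : L.Formula (Fin nx ⊕ Fin ny)} {k k' : ℕ}
    {G : (Fin k → Fin ny → U) → Set (Fin nx → U)}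
    (hG : InDeltaPhi φ k G) (f : Fin k → Fin k') :
    InDeltaPhi φ k' fun bs => G (bs ∘ f) := by
  induction hG with
  | inst j => exact .inst _ (f j)
  | empty => exact .empty _
  | compl _ ih => exact .compl ih
  | union _ _ ih ih' => exact .union ih ih'

/-- Every set in `Def_φ(U)` is an instance of a formula in `Δ_φ`. -/
theorem InPhiAlg.exists_delta {U : Type} [L.Structure U] {nx ny : ℕ}
    {φ : L.Formula (Fin nx ⊕ Fin ny)} {s : Set (Fin nx → U)} (hs : InPhiAlg φ s) :
    ∃ k G, InDeltaPhi φ k G ∧ ∃ bs, G bs = s := by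
  induction hs with
  | basic b => exact ⟨1, _, .inst 1 0, fun _ => b, rfl⟩
  | empty => exact ⟨0, _, .empty 0, Fin.elim0, rfl⟩
  | compl _ ih =>
    obtain ⟨k, G, hG, bs, rfl⟩ := ih
    exact ⟨k, _, hG.compl, bs, rfl⟩
  | union _ _ ih ih' =>
    obtain ⟨k, G, hG, bs, rfl⟩ := ih
    obtain ⟨k', G', hG', bs', rfl⟩ := ih'
    refine ⟨k + k', _, (hG.reindex (Fin.castAdd k')).union (hG'.reindex (Fin.natAdd k)),
      Fin.append bs bs', ?_⟩
    congr 2 <;> funext i <;> simp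

theorem InPhiAlg.inter {U : Type} [L.Structure U] {nx ny : ℕ}
    {φ : L.Formula (Fin nx ⊕ Fin ny)} {s t : Set (Fin nx → U)} (hs : InPhiAlg φ s)
    (ht : InPhiAlg φ t) : InPhiAlg φ (s ∩ t) := by
  have := (hs.compl.union ht.compl).compl
  rwa [Set.compl_union, compl_compl, compl_compl] at this

open Classical in
/-- Polynomial growth for `θ ∈ Δ_φ`: on a list of `n` parameter tuples, functions of the truth value
of `θ` take at most `(k n + 1) ^ d` vectors of values, where `d` depends only on `φ`. The traces of
`θ` are determined by those of the `k n` instances of `φ` involved. -/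
theorem growth_delta {U : Type} [L.Structure U] {nx ny : ℕ}
    {φ : L.Formula (Fin nx ⊕ Fin ny)} (hNIP : FormulaIsNIP U φ)
    {k : ℕ} {G : (Fin k → Fin ny → U) → Set (Fin nx → U)} (hG : InDeltaPhi φ k G) :
    ∃ d : ℕ, ∀ (F : (Fin k → Fin ny → U) × Bool → Prop → ℝ) (n : ℕ)
      (z : Fin n → (Fin k → Fin ny → U) × Bool),
      ∃ W : Finset (Fin n → ℝ),
        (∀ a : Fin nx → U, (fun i => F (z i) (a ∈ G (z i).1)) ∈ W) ∧
        W.card ≤ (k * n + 1) ^ d := by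
  obtain ⟨d, hd⟩ := exists_traces hNIP
  refine ⟨d, fun F n z => ?_⟩
  obtain ⟨𝒜, h𝒜, hcard⟩ := hd (Fin n × Fin k) fun p => (z p.1).1 p.2
  let tr : (Fin nx → U) → Finset (Fin n × Fin k) :=
    fun a => Finset.univ.filter fun p => a ∈ phiSet φ ((z p.1).1 p.2)
  let v : (Fin nx → U) → Fin n → ℝ := fun a i => F (z i) (a ∈ G (z i).1)
  have hfac : Function.FactorsThrough v tr := by
    intro a a' h
    funext i
    have : a ∈ G (z i).1 ↔ a' ∈ G (z i).1 := hG.mem_iff fun j => by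
      have := Finset.ext_iff.1 h (i, j)
      simpa [tr] using this
    simp only [v, this]
  refine ⟨𝒜.image (Function.extend tr v 0), fun a => ?_, ?_⟩
  · exact Finset.mem_image.2 ⟨tr a, h𝒜 a, hfac.extend_apply 0 a⟩
  · refine Finset.card_image_le.trans (hcard.trans (le_of_eq ?_))
    simp [mul_comm]

/-! ### Integration against a finitely satisfiable measure -/

/-- An inequality `∑ s_i 1_{S_i} ≤ c` which holds at the points of `M` in `E` can be integrated over
`E`. The induction on `J` splits `E` along `S_j`, absorbing the term `s_j` into the constant `c`
on `S_j`. -/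
theorem FinSat.sum_le {U : Type} [L.Structure U] {nx ny : ℕ}
    {φ : L.Formula (Fin nx ⊕ Fin ny)} {M : L.ElementarySubstructure U}
    {μ : KeislerMeasure U φ} (hfs : FinSat φ M μ) {ι : Type*} (S : ι → Set (Fin nx → U))
    (hS : ∀ i, InPhiAlg φ (S i)) (s : ι → ℝ) (J : Finset ι) :
    ∀ (E : Set (Fin nx → U)) (_ : InPhiAlg φ E) (c : ℝ),
      (∀ a : Fin nx → M, (fun q => (a q : U)) ∈ E →
        ∑ i ∈ J, s i * (S i).indicator (fun _ => (1 : ℝ)) (fun q => (a q : U)) ≤ c) →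
      ∑ i ∈ J, s i * μ.toFun (S i ∩ E) ≤ c * μ.toFun E := by
  classical
  induction J using Finset.induction_on with
  | empty =>
    intro E hE c h
    rcases (μ.nonneg E hE).eq_or_lt with h0 | h0
    · simp [← h0]
    · obtain ⟨a, ha⟩ := hfs E hE h0
      have := h a ha
      simp only [Finset.sum_empty] at this ⊢
      positivity
  | insert j J hj ih =>
    intro E hE c h
    have hE₁ := (hS j).inter hE
    have hE₂ := (hS j).compl.inter hE
    have split : ∀ D, InPhiAlg φ D → μ.toFun (D ∩ E) =
        μ.toFun (D ∩ (S j ∩ E)) + μ.toFun (D ∩ ((S j)ᶜ ∩ E)) := by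
      intro D hD
      rw [← μ.additive _ _ (hD.inter hE₁) (hD.inter hE₂)]
      · congr 1
        ext x
        by_cases hx : x ∈ S j <;> simp [hx]
      · rw [Set.disjoint_left]
        rintro x ⟨-, hx, -⟩ ⟨-, hx', -⟩
        exact hx' hx
    have split' : μ.toFun E = μ.toFun (S j ∩ E) + μ.toFun ((S j)ᶜ ∩ E) := by
      have hu : InPhiAlg φ (Set.univ : Set (Fin nx → U)) := by
        simpa using (InPhiAlg.empty (φ := φ) (U := U)).compl
      simpa using split _ hu
    have h1 := ih _ hE₁ (c - s j) (by
      rintro a ⟨ha, haE⟩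
      have := h a haE
      rw [Finset.sum_insert hj, Set.indicator_of_mem ha] at this
      linarith)
    have h2 := ih _ hE₂ c (by
      rintro a ⟨ha, haE⟩
      have := h a haE
      rw [Finset.sum_insert hj, Set.indicator_of_notMem ha] at this
      linarith)
    rw [Finset.sum_insert hj, Finset.sum_congr rfl fun i _ => by rw [split _ (hS i), mul_add],
      Finset.sum_add_distrib, split']
    linarith

/-! ### Definability and saturation -/

/-- For fixed `a`, the parameter tuples `ȳ` satisfying `θ(a;ȳ)`, where `θ ∈ Δ_φ`, form a set
definable over the coordinates of `a`. -/
theorem InDeltaPhi.definable {U : Type} [L.Structure U] {nx ny : ℕ}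
    {φ : L.Formula (Fin nx ⊕ Fin ny)} {k : ℕ} {G : (Fin k → Fin ny → U) → Set (Fin nx → U)}
    (hG : InDeltaPhi φ k G) {A : Set U} {a : Fin nx → U} (ha : ∀ q, a q ∈ A) :
    A.Definable L {v : Fin k × Fin ny → U | a ∈ G fun j q => v (j, q)} := by
  induction hG with
  | inst j =>
    refine Set.definable_iff_exists_formula_sum.2
      ⟨φ.relabel (Sum.map (fun q => (⟨a q, ha q⟩ : A)) (fun q => (j, q))), ?_⟩
    ext v
    simp only [phiSet, Set.mem_ofPred_eq, Language.Formula.realize_relabel, Sum.elim_comp_map]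
    rfl
  | empty => exact Set.definable_empty
  | compl _ ih => exact ih.compl
  | union _ _ ih ih' => exact ih.union ih'

/-- A set is definable if membership in it depends only on membership in finitely many definable
sets. -/
theorem definable_of_finite_pattern {U α ι : Type*} [L.Structure U] [Finite ι] {A : Set U}
    {D : ι → Set (α → U)} (hD : ∀ i, A.Definable L (D i)) (Q : (ι → Prop) → Prop) :
    A.Definable L {v | Q fun i => v ∈ D i} := by
  have h : {v | Q fun i => v ∈ D i} =
      ⋃ T : {T : ι → Prop // Q T}, ⋂ i, {v | v ∈ D i ↔ T.1 i} := by
    ext v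
    simp only [Set.mem_ofPred_eq, Set.mem_iUnion, Set.mem_iInter]
    constructor
    · exact fun hv => ⟨⟨_, hv⟩, fun _ => Iff.rfl⟩
    · rintro ⟨T, hT⟩
      have : (fun i => v ∈ D i) = T.1 := funext fun i => propext (hT i)
      rw [this]
      exact T.2
  rw [h]
  refine Set.definable_iUnion_of_finite fun T => Set.definable_iInter_of_finite fun i => ?_
  by_cases hT : T.1 i
  · simpa [hT] using hD i
  · simp only [hT, iff_false]
    exact (hD i).compl

/-- Saturation in terms of definable sets: a family of `M`-definable sets with the finite
intersection property has a common point. -/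
theorem IsSaturated.exists_mem {U : Type} [L.Structure U] {κ : Cardinal.{0}}
    (hsat : IsSaturated L U κ) (M : L.ElementarySubstructure U) (hM : #M < κ)
    {α : Type} [Finite α] (𝒮 : Set (Set (α → U)))
    (hdef : ∀ s ∈ 𝒮, (M : Set U).Definable L s)
    (hfip : ∀ t : Finset (Set (α → U)), ↑t ⊆ 𝒮 → ∃ v, ∀ s ∈ t, v ∈ s) :
    ∃ v, ∀ s ∈ 𝒮, v ∈ s := by
  classical
  obtain ⟨n, ⟨e⟩⟩ := Finite.exists_equiv_fin α
  let R : L.Formula (Fin n ⊕ M) → Set (α → U) := fun ψ =>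
    {v | ψ.Realize (Sum.elim (v ∘ e.symm) (fun m : M => (m : U)))}
  obtain ⟨a, ha⟩ := hsat M hM (fun m => (m : U)) n {ψ | R ψ ∈ 𝒮} (by
    intro s hs
    obtain ⟨v, hv⟩ := hfip (s.image R) (by
      intro x hx
      obtain ⟨ψ, hψ, rfl⟩ := Finset.mem_image.1 (Finset.mem_coe.1 hx)
      exact hs hψ)
    exact ⟨v ∘ e.symm, fun ψ hψ => hv _ (Finset.mem_image_of_mem R hψ)⟩)
  refine ⟨a ∘ e, fun s hs => ?_⟩
  obtain ⟨ψ, hψ⟩ := Set.definable_iff_exists_formula_sum.1 (hdef s hs)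
  let ψ' : L.Formula (Fin n ⊕ M) := ψ.relabel (Sum.elim Sum.inr (Sum.inl ∘ e))
  have hR : R ψ' = s := by
    rw [hψ]
    ext v
    simp only [R, ψ', Set.mem_ofPred_eq, Language.Formula.realize_relabel]
    refine iff_of_eq (congrArg _ ?_)
    funext x
    rcases x with x | x <;> simp
  have h := ha ψ' (by simpa [hR] using hs)
  rw [← hR]
  simp only [R, Set.mem_ofPred_eq]
  convert h using 2
  funext i
  simp

/-- Definability over a finite subset of `M`, expressed by formulas whose parameters are one fixed
finite tuple `c` from `M`. -/
theorem exists_formula_fin {U α : Type} [L.Structure U] {M : L.ElementarySubstructure U}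
    {A : Set U} (hA : A.Finite) (hAM : A ⊆ M) : ∃ (j : ℕ) (c : Fin j → M),
    ∀ s : Set (α → U), A.Definable L s → ∃ ψ : L.Formula (α ⊕ Fin j),
      ∀ v, ψ.Realize (Sum.elim v fun t => (c t : U)) ↔ v ∈ s := by
  have := hA.to_subtype
  obtain ⟨j, ⟨e⟩⟩ := Finite.exists_equiv_fin A
  refine ⟨j, fun t => ⟨e.symm t, hAM (e.symm t).2⟩, fun s hs => ?_⟩
  obtain ⟨ψ, rfl⟩ := Set.definable_iff_exists_formula_sum.1 hs
  refine ⟨ψ.relabel (Sum.elim (Sum.inr ∘ e) Sum.inl), fun v => ?_⟩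
  simp only [Set.mem_ofPred_eq, Language.Formula.realize_relabel]
  refine iff_of_eq (congrArg _ ?_)
  funext x
  rcases x with x | x <;> simp

theorem definable_of_formula_fin {U α : Type} [L.Structure U] {M : L.ElementarySubstructure U}
    {j : ℕ} (ψ : L.Formula (α ⊕ Fin j)) (c : Fin j → M) :
    (M : Set U).Definable L {v : α → U | ψ.Realize (Sum.elim v fun t => (c t : U))} := by
  refine Set.definable_iff_exists_formula_sum.2
    ⟨ψ.relabel (Sum.elim Sum.inr (Sum.inl ∘ c)), ?_⟩
  ext v
  simp only [Set.mem_ofPred_eq, Language.Formula.realize_relabel]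
  refine iff_of_eq (congrArg _ ?_)
  funext x
  rcases x with x | x <;> simp

/-! ### Approximation by points of the submodel -/

theorem dyadicMean_sub_le {K : ℕ} {x y : Fin (2 ^ K) → ℝ} {η : ℝ}
    (h : ∀ i, x i - η ≤ y i) : dyadicMean x - η ≤ dyadicMean y := by
  have h1 : ∑ i, (x i - η) ≤ ∑ i, y i := Finset.sum_le_sum fun i _ => h i
  have h2 : (0 : ℝ) < 2 ^ K := by positivity
  simp only [Finset.sum_sub_distrib, Finset.sum_const, Finset.card_univ, Fintype.card_fin,
    nsmul_eq_mul] at h1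
  push_cast at h1
  simp only [dyadicMean, smul_eq_mul, inv_mul_eq_div]
  rw [le_div_iff₀ h2, sub_mul, div_mul_cancel₀ _ h2.ne']
  linarith

theorem KeislerMeasure.le_one {U : Type} [L.Structure U] {nx ny : ℕ}
    {φ : L.Formula (Fin nx ⊕ Fin ny)} (μ : KeislerMeasure U φ) {s : Set (Fin nx → U)}
    (hs : InPhiAlg φ s) : μ.toFun s ≤ 1 := by
  have h := μ.additive s sᶜ hs hs.compl disjoint_compl_right
  rw [Set.union_compl_self, μ.total] at h
  linarith [μ.nonneg _ hs.compl]

/-- The signed error `±(μ(θ(x;b̄)) - 1_{θ(x;b̄)}(a))` of the point `a` as an approximation of `μ` at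
the parameter tuple `b̄ = z.1`. The sign is `+` if `z.2 = true` and `-` otherwise. -/
noncomputable def payoff {U : Type} [L.Structure U] {nx ny : ℕ}
    {φ : L.Formula (Fin nx ⊕ Fin ny)} (μ : KeislerMeasure U φ) {k : ℕ}
    (G : (Fin k → Fin ny → U) → Set (Fin nx → U)) (a : Fin nx → U)
    (z : (Fin k → Fin ny → U) × Bool) : ℝ :=
  (if z.2 then 1 else -1) * (μ.toFun (G z.1) - (G z.1).indicator (fun _ => 1) a)

theorem abs_payoff_le {U : Type} [L.Structure U] {nx ny : ℕ}
    {φ : L.Formula (Fin nx ⊕ Fin ny)} (μ : KeislerMeasure U φ) {k : ℕ}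
    {G : (Fin k → Fin ny → U) → Set (Fin nx → U)} (hG : InDeltaPhi φ k G) (a : Fin nx → U)
    (z : (Fin k → Fin ny → U) × Bool) : |payoff μ G a z| ≤ 1 := by
  have h0 := μ.nonneg _ (hG.inPhiAlg z.1)
  have h1 := μ.le_one (hG.inPhiAlg z.1)
  unfold payoff
  rw [abs_mul, show |(if z.2 then (1 : ℝ) else -1)| = 1 by split_ifs <;> simp, one_mul, abs_le]
  by_cases ha : a ∈ G z.1
  · rw [Set.indicator_of_mem ha]
    constructor <;> linarith
  · rw [Set.indicator_of_notMem ha]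
    constructor <;> linarith

/-- No list of signed parameters has mean payoff at least some `δ > 0` on all points of `M`: the mean
payoff integrates to `0` against `μ`. -/
theorem FinSat.exists_payoff_lt {U : Type} [L.Structure U] {nx ny : ℕ}
    {φ : L.Formula (Fin nx ⊕ Fin ny)} {M : L.ElementarySubstructure U}
    {μ : KeislerMeasure U φ} (hfs : FinSat φ M μ) {k : ℕ}
    {G : (Fin k → Fin ny → U) → Set (Fin nx → U)} (hG : InDeltaPhi φ k G) {K : ℕ}
    (z : Fin (2 ^ K) → (Fin k → Fin ny → U) × Bool) {δ : ℝ} (hδ : 0 < δ) :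
    ∃ a : Fin nx → M, dyadicMean (fun i => payoff μ G (fun q => (a q : U)) (z i)) < δ := by
  by_contra hcon
  push Not at hcon
  have h2 : (0 : ℝ) < 2 ^ K := by positivity
  have hu : InPhiAlg φ (Set.univ : Set (Fin nx → U)) := by
    simpa using (InPhiAlg.empty (φ := φ) (U := U)).compl
  have h := hfs.sum_le (fun i => G (z i).1) (fun i => hG.inPhiAlg _)
    (fun i => if (z i).2 then 1 else -1) Finset.univ Set.univ hu
    (∑ i, (if (z i).2 then 1 else -1) * μ.toFun (G (z i).1) - 2 ^ K * δ) (fun a _ => by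
      have := hcon a
      simp only [dyadicMean, smul_eq_mul, inv_mul_eq_div, payoff, mul_sub, Finset.sum_sub_distrib] at this
      rw [← sub_div, le_div_iff₀ h2] at this
      linarith)
  simp only [Set.inter_univ, μ.total, mul_one] at h
  nlinarith

/-- If, for every finite `A`, some list of length `2 ^ K` has mean payoff at least `ε` on `A`, then
some list of that length has mean payoff at least `ε - 2 η` on all points of `M`. The payoff is not
itself definable, but it becomes so once `μ(θ(x;b̄))` is replaced by a constant on each piece of an
`M`-definable partition. This costs `η` on passing to the definable condition, and `η`
again on returning from it. -/
theorem exists_uniform_points {U : Type} [L.Structure U] {nx ny : ℕ}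
    {φ : L.Formula (Fin nx ⊕ Fin ny)} {κ : Cardinal.{0}} (hsat : IsSaturated L U κ)
    {M : L.ElementarySubstructure U} (hM : #M < κ) {μ : KeislerMeasure U φ}
    (hdef : DefinableOver φ M μ) {k : ℕ} {G : (Fin k → Fin ny → U) → Set (Fin nx → U)}
    (hG : InDeltaPhi φ k G) (K : ℕ) {ε η : ℝ} (hη : 0 < η)
    (hz : ∀ A : Finset (Fin nx → M), ∃ z : Fin (2 ^ K) → (Fin k → Fin ny → U) × Bool,
      ∀ a ∈ A, ε ≤ dyadicMean fun i => payoff μ G (fun q => (a q : U)) (z i)) :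
    ∃ z : Fin (2 ^ K) → (Fin k → Fin ny → U) × Bool,
      ∀ a : Fin nx → M, ε - 2 * η ≤ dyadicMean fun i => payoff μ G (fun q => (a q : U)) (z i) := by
  classical
  obtain ⟨m, j, ρ, c, hpart, hosc⟩ := hdef k G hG η hη
  let B := Fin k → Fin ny → U
  let real : Fin m → B → Prop := fun i bs =>
    (ρ i).Realize (Sum.elim (fun q => bs q.1 q.2) (fun t => (c t : U)))
  -- `r i` approximates the measure on the piece `ρ i`; its value on an empty piece is irrelevant
  have hr : ∃ r : Fin m → ℝ, ∀ i bs, real i bs → |μ.toFun (G bs) - r i| < η := by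
    have : ∀ i, ∃ r : ℝ, ∀ bs, real i bs → |μ.toFun (G bs) - r| < η := by
      intro i
      by_cases h : ∃ e, real i e
      · obtain ⟨e, he⟩ := h
        exact ⟨μ.toFun (G e), fun bs hbs => hosc i bs e hbs he⟩
      · exact ⟨0, fun bs hbs => (h ⟨bs, hbs⟩).elim⟩
    choose r hr using this
    exact ⟨r, hr⟩
  obtain ⟨r, hr⟩ := hr
  -- A single pattern of pieces and signs serves all finite sets: there are finitely many patterns,
  -- and if each failed on some finite set, then all would fail on the union of these sets.
  obtain ⟨p, hp⟩ : ∃ p : Fin (2 ^ K) → Fin m × Bool, ∀ A : Finset (Fin nx → M),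
      ∃ b : Fin (2 ^ K) → B, (∀ i, real (p i).1 (b i)) ∧
        ∀ a ∈ A, ε ≤ dyadicMean fun i => payoff μ G (fun q => (a q : U)) (b i, (p i).2) := by
    by_contra hcon
    push Not at hcon
    choose A hA using hcon
    obtain ⟨z, hz⟩ := hz (Finset.univ.biUnion A)
    choose cls hcls _ using fun i => hpart (z i).1
    obtain ⟨a, ha, hlt⟩ := hA (fun i => (cls i, (z i).2)) (fun i => (z i).1) hcls
    exact absurd (hz a (Finset.mem_biUnion.2 ⟨_, Finset.mem_univ _, ha⟩)) (not_le.2 hlt)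
  -- a list of parameter tuples, flattened to a single finite tuple from `U`
  let α := Fin (2 ^ K) × Fin k × Fin ny
  let pt : (α → U) → Fin (2 ^ K) → B := fun v i j q => v (i, j, q)
  -- `D i`: entry `i` lies in its prescribed piece
  let D : Fin (2 ^ K) → Set (α → U) := fun i => {v | real (p i).1 (pt v i)}
  let Q : (Fin (2 ^ K) → Prop) → Prop := fun T =>
    ε - η ≤ dyadicMean fun i =>
      (if (p i).2 then (1 : ℝ) else -1) * (r (p i).1 - if T i then 1 else 0)
  -- `E a`: the mean payoff of `a`, computed with the constants `r`, is at least `ε - η`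
  let E : (Fin nx → M) → Set (α → U) := fun a =>
    {v | Q fun i => v ∈ {v | (fun q => (a q : U)) ∈ G (pt v i)}}
  have hsgn : ∀ b : Bool, ∀ x y : ℝ, |x - y| < η → ∀ t : ℝ,
      (if b then (1 : ℝ) else -1) * (x - t) - η ≤ (if b then (1 : ℝ) else -1) * (y - t) := by
    intro b x y h t
    have := abs_lt.1 h
    split_ifs <;> linarith
  obtain ⟨v, hv⟩ := hsat.exists_mem M hM (Set.range D ∪ Set.range E) (by
    rintro s (⟨i, rfl⟩ | ⟨a, rfl⟩)
    · exact (definable_of_formula_fin (ρ (p i).1) c).preimage_comp fun q => (i, q)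
    · refine definable_of_finite_pattern (fun i => ?_) Q
      exact (hG.definable (A := (M : Set U)) fun q => (a q).2).preimage_comp fun q => (i, q))
    (by
      intro t ht
      have : ∀ s : t, ∃ A : Finset (Fin nx → M), (s : Set (α → U)) ∈ Set.range D ∨
          ∃ a ∈ A, E a = s := by
        rintro ⟨s, hs⟩
        rcases ht hs with h | ⟨a, ha⟩
        · exact ⟨∅, Or.inl h⟩
        · exact ⟨{a}, Or.inr ⟨a, by simp, ha⟩⟩
      choose A hA using this
      obtain ⟨b, hb, hbA⟩ := hp (Finset.univ.biUnion A)
      refine ⟨fun x => b x.1 x.2.1 x.2.2, fun s hs => ?_⟩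
      rcases hA ⟨s, hs⟩ with ⟨i, hi⟩ | ⟨a, ha, has⟩
      · rw [← show D i = s from hi]
        exact hb i
      · rw [← show E a = s from has]
        refine le_trans (sub_le_sub_right
          (hbA a (Finset.mem_biUnion.2 ⟨_, Finset.mem_univ _, ha⟩)) η) ?_
        refine dyadicMean_sub_le fun i => ?_
        have := hsgn (p i).2 _ _ (hr _ _ (hb i))
          ((G (b i)).indicator (fun _ => 1) fun q => (a q : U))
        simp only [payoff, Set.indicator_apply] at this ⊢
        exact this)
  have hvD : ∀ i, real (p i).1 (pt v i) := fun i => hv (D i) (Or.inl ⟨i, rfl⟩)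
  refine ⟨fun i => (pt v i, (p i).2), fun a => ?_⟩
  have h1 : Q fun i => v ∈ {v | (fun q => (a q : U)) ∈ G (pt v i)} := hv (E a) (Or.inr ⟨a, rfl⟩)
  have h2 : ε - 2 * η ≤ (ε - η) - η := by linarith
  refine h2.trans ((sub_le_sub_right h1 η).trans (dyadicMean_sub_le fun i => ?_))
  have := hsgn (p i).2 (r (p i).1) (μ.toFun (G (pt v i)))
    (by rw [abs_sub_comm]; exact hr _ _ (hvD i))
    ((G (pt v i)).indicator (fun _ => 1) fun q => (a q : U))
  simp only [payoff, Set.indicator_apply] at this ⊢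
  exact this

/-- Some finite convex combination of point masses in `M` is `δ`-close to `μ`, uniformly over all
instances of `θ ∈ Δ_φ`. -/
theorem exists_convex_approx {U : Type} [L.Structure U] [Nonempty U] {nx ny : ℕ}
    {φ : L.Formula (Fin nx ⊕ Fin ny)} {κ : Cardinal.{0}} (hsat : IsSaturated L U κ)
    {M : L.ElementarySubstructure U} (hM : #M < κ) (hNIP : FormulaIsNIP U φ)
    {μ : KeislerMeasure U φ} (hdef : DefinableOver φ M μ) (hfs : FinSat φ M μ)
    {k : ℕ} {G : (Fin k → Fin ny → U) → Set (Fin nx → U)}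
    (hG : InDeltaPhi φ k G) {δ : ℝ} (hδ : 0 < δ) :
    ∃ (A : Finset (Fin nx → M)) (l : A → ℝ), (∀ a, 0 ≤ l a) ∧ ∑ a, l a = 1 ∧
      ∀ bs, |μ.toFun (G bs) -
        ∑ a : A, l a * (G bs).indicator (fun _ => (1 : ℝ)) (fun q => ((a : Fin nx → M) q : U))|
          ≤ δ := by
  classical
  by_contra hcon
  push Not at hcon
  obtain ⟨d, hd⟩ := growth_delta hNIP hG
  obtain ⟨k₀, hk₀⟩ := thinning k d (δ / 4) (by linarith)
  have hthin := hk₀ (fun (a : Fin nx → U) z => payoff μ G a z)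
    (fun a z => abs_payoff_le μ hG a z) (fun n z => by
      obtain ⟨W, hW, hc⟩ := hd (fun z P => (if z.2 then 1 else -1) *
        (μ.toFun (G z.1) - if P then 1 else 0)) n z
      refine ⟨W, fun a => ?_, hc⟩
      simpa only [payoff, Set.indicator_apply] using hW a)
  have hu : InPhiAlg φ (Set.univ : Set (Fin nx → U)) := by
    simpa using (InPhiAlg.empty (φ := φ) (U := U)).compl
  obtain ⟨a₀, -⟩ := hfs Set.univ hu (by rw [μ.total]; exact one_pos)
  -- `3δ/4` remains after the loss of `δ/4` in thinning; saturation costs another `2 · δ/4`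
  obtain ⟨z, hz⟩ := exists_uniform_points (ε := 3 * δ / 4) (η := δ / 4) hsat hM hdef hG k₀
    (by linarith) (fun A₀ => by
      -- `minimax` requires a nonempty set of points
      let A := insert a₀ A₀
      have : Nonempty A := ⟨⟨a₀, Finset.mem_insert_self _ _⟩⟩
      rcases minimax (I := A) (P := (Fin k → Fin ny → U) × Bool)
        (fun a z => payoff μ G (fun q => ((a : Fin nx → M) q : U)) z) δ with
        ⟨l, hl0, hl1, hl⟩ | hlist
      -- weights good against both signs would approximate `μ` within `δ`
      · obtain ⟨bs, hbs⟩ := hcon A l hl0 hl1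
        have key : ∀ b : Bool, ∑ a : A, l a * payoff μ G
            (fun q => ((a : Fin nx → M) q : U)) (bs, b) = (if b then 1 else -1) *
            (μ.toFun (G bs) - ∑ a : A, l a *
              (G bs).indicator (fun _ => (1 : ℝ)) (fun q => ((a : Fin nx → M) q : U))) := by
          intro b
          have : μ.toFun (G bs) = ∑ a : A, l a * μ.toFun (G bs) := by
            rw [← Finset.sum_mul, hl1, one_mul]
          conv_rhs => rw [this]
          rw [← Finset.sum_sub_distrib, Finset.mul_sum]
          refine Finset.sum_congr rfl fun a _ => ?_
          simp only [payoff]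
          ring
        have h1 := hl (bs, true)
        have h2 := hl (bs, false)
        rw [key] at h1 h2
        simp only [if_true, Bool.false_eq_true, if_false] at h1 h2
        exact absurd (abs_le.2 ⟨by linarith, by linarith⟩) (not_le.2 hbs)
      · obtain ⟨K, hK, z, hz⟩ := hlist k₀
        obtain ⟨z', hz'⟩ := hthin K hK z
        refine ⟨z', fun a ha => ?_⟩
        have h1 := hz ⟨a, Finset.mem_insert_of_mem ha⟩
        have h2 := hz' fun q => (a q : U)
        dsimp only at h1
        linarith)
  obtain ⟨a, ha⟩ := hfs.exists_payoff_lt hG z (δ := δ / 4) (by linarith)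
  have := hz a
  linarith

theorem GenericallyStable.finApprox {U : Type} [L.Structure U] [Nonempty U] {nx ny : ℕ}
    {φ : L.Formula (Fin nx ⊕ Fin ny)} {κ : Cardinal.{0}} (hsat : IsSaturated L U κ)
    {M : L.ElementarySubstructure U} (hM : #M < κ) (hNIP : FormulaIsNIP U φ)
    {μ : KeislerMeasure U φ} (h : GenericallyStable φ M μ) : FinApprox φ M μ := by
  classical
  intro k G hG ε hε
  obtain ⟨A, l, hl0, hl1, hl⟩ :=
    exists_convex_approx hsat hM hNIP h.1 h.2 hG (δ := ε / 2) (by linarith)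
  -- a convex combination with equal dyadic weights, repetitions allowed, within `ε/2` of `l` in `ℓ¹`
  let O : Set (A → ℝ) := {w | ∑ a, |w a - l a| < ε / 2}
  have hO : IsOpen O := isOpen_lt (by fun_prop) continuous_const
  have hlS : l ∈ convexHull ℝ (Set.range fun a : A => (Pi.single a 1 : A → ℝ)) := by
    rw [convexHull_rangle_single_eq_stdSimplex]
    exact ⟨hl0, hl1⟩
  obtain ⟨K, -, v, hv, hvO⟩ := exists_dyadicMean_mem hlS hO
    (by simp only [O, Set.mem_ofPred_eq, sub_self, abs_zero, Finset.sum_const_zero]; linarith) 0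
  choose a ha using hv
  refine ⟨2 ^ K, by positivity, fun i => (a i : Fin nx → M), fun bs => ?_⟩
  let ind : (Fin nx → M) → ℝ := fun a =>
    (G bs).indicator (fun _ => (1 : ℝ)) fun q => (a q : U)
  have hAv : Av (fun i => fun q => (((a i : Fin nx → M) q : M) : U)) (G bs) =
      ∑ b : A, dyadicMean v b * ind b := by
    have h1 : ∀ b : A, dyadicMean v b * ind b =
        ((2 : ℝ) ^ K)⁻¹ * ∑ i, (Pi.single (a i) (1 : ℝ) : A → ℝ) b * ind b := by
      intro b
      simp only [dyadicMean, Pi.smul_apply, Finset.sum_apply, smul_eq_mul]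
      rw [mul_assoc, Finset.sum_mul]
      congr 1
      exact Finset.sum_congr rfl fun i _ => by rw [← ha i]
    rw [Finset.sum_congr rfl fun b _ => h1 b, ← Finset.mul_sum, Finset.sum_comm]
    unfold Av
    push_cast
    rw [inv_mul_eq_div]
    congr 1
    refine Finset.sum_congr rfl fun i _ => ?_
    rw [Finset.sum_eq_single (a i)]
    · simp [ind]
    · intro b _ hb
      simp [Pi.single_eq_of_ne hb]
    · simp
  rw [hAv]
  have h1 : |∑ b : A, l b * ind b - ∑ b : A, dyadicMean v b * ind b| < ε / 2 := by
    rw [← Finset.sum_sub_distrib]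
    refine lt_of_le_of_lt (Finset.abs_sum_le_sum_abs _ _) (lt_of_le_of_lt ?_ hvO)
    refine Finset.sum_le_sum fun b _ => ?_
    rw [← sub_mul, abs_mul, abs_sub_comm]
    refine mul_le_of_le_one_right (abs_nonneg _) ?_
    simp only [ind, Set.indicator_apply]
    split_ifs <;> simp
  have h2 := hl bs
  calc _ ≤ |μ.toFun (G bs) - ∑ b : A, l b * ind b| +
        |∑ b : A, l b * ind b - ∑ b : A, dyadicMean v b * ind b| := abs_sub_le _ _ _
    _ < ε := by
      have h3 : |μ.toFun (G bs) - ∑ b : A, l b * ind b| ≤ ε / 2 := h2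
      linarith

theorem FinApprox.genericallyStable {U : Type} [L.Structure U] {nx ny : ℕ}
    {φ : L.Formula (Fin nx ⊕ Fin ny)} {M : L.ElementarySubstructure U}
    {μ : KeislerMeasure U φ} (h : FinApprox φ M μ) : GenericallyStable φ M μ := by
  classical
  refine ⟨fun k G hG ε hε => ?_, fun s hs hpos => ?_⟩
  · obtain ⟨n, -, a, ha⟩ := h k G hG (ε / 2) (by linarith)
    -- one piece for each set of indices `i` such that `θ(a i;ȳ)` holds
    let A : Set U := Set.range fun p : Fin n × Fin nx => (a p.1 p.2 : U)
    obtain ⟨j, c, hc⟩ := exists_formula_fin (α := Fin k × Fin ny) (M := M)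
      (A := A) (Set.finite_range _) (by rintro _ ⟨p, rfl⟩; exact (a p.1 p.2).2)
    let D : Fin n → Set (Fin k × Fin ny → U) := fun i =>
      {v | (fun q => (a i q : U)) ∈ G fun j q => v (j, q)}
    obtain ⟨m, ⟨e⟩⟩ := Finite.exists_equiv_fin (Fin n → Prop)
    have hψ : ∀ t : Fin m, ∃ ψ : L.Formula ((Fin k × Fin ny) ⊕ Fin j),
        ∀ v, ψ.Realize (Sum.elim v fun t => (c t : U)) ↔ (fun i => v ∈ D i) = e.symm t := by
      intro t
      exact hc _ (definable_of_finite_pattern (D := D)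
        (fun i => hG.definable (A := A) fun q => Set.mem_range_self (i, q)) (· = e.symm t))
    choose ρ hρ using hψ
    refine ⟨m, j, ρ, c, fun bs => ?_, fun t b b' hb hb' => ?_⟩
    · refine ⟨e fun i => (fun q => bs q.1 q.2) ∈ D i, ?_, fun t ht => ?_⟩
      · simp only [hρ, Equiv.symm_apply_apply]
      · rw [(hρ t _).1 ht, Equiv.apply_symm_apply]
    · rw [hρ] at hb hb'
      have heq : Av (fun i => fun q => (a i q : U)) (G b) =
          Av (fun i => fun q => (a i q : U)) (G b') := by
        unfold Av
        congr 1
        refine Finset.sum_congr rfl fun i _ => ?_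
        have : ((fun q => (a i q : U)) ∈ G b) = ((fun q => (a i q : U)) ∈ G b') :=
          congrFun (hb.trans hb'.symm) i
        simp only [Set.indicator_apply, this]
      have h1 := abs_lt.1 (ha b)
      have h2 := abs_lt.1 (ha b')
      rw [heq] at h1
      rw [abs_lt]
      constructor <;> linarith
  · obtain ⟨k, G, hG, bs, rfl⟩ := hs.exists_delta
    obtain ⟨n, -, a, ha⟩ := h k G hG _ hpos
    by_contra hcon
    push Not at hcon
    have h0 : Av (fun i => fun q => (a i q : U)) (G bs) = 0 := by
      unfold Av
      rw [Finset.sum_eq_zero fun i _ => Set.indicator_of_notMem (hcon (a i)) _, zero_div]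
    have := ha bs
    rw [h0, sub_zero, abs_of_pos hpos] at this
    exact lt_irrefl _ this

/-- **Main Theorem (Theorem 4.17).** Let `φ(x;y)` be NIP and `μ ∈ 𝔐_φ(U)`. Then `μ` is
generically stable over `M` if and only if `μ` is finitely approximable over `M`. -/
theorem stmt_17
    {L : FirstOrder.Language.{0, 0}} (T : L.Theory) (hT : T.IsComplete)
    (hL : L.card ≤ Cardinal.aleph0)
    {U : Type} [L.Structure U] [Nonempty U] (hUT : T.Model U)
    (κ : Cardinal.{0}) (hκ : Cardinal.aleph0 < κ) (hreg : κ.IsRegular)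
    (hsat : IsSaturated L U κ) (hhom : IsStronglyHomogeneous L U κ)
    (M : L.ElementarySubstructure U) (hM : #M < κ)
    {nx ny : ℕ} (φ : L.Formula (Fin nx ⊕ Fin ny))    (hNIP : FormulaIsNIP U φ) (μ : KeislerMeasure U φ) :
    GenericallyStable φ M μ ↔ FinApprox φ M μ := by
  exact ⟨fun h => h.finApprox hsat hM hNIP, fun h => h.genericallyStable⟩
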